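/- Let m, k, ℓ, e be positive integers with k | m, k ≥ 3, e ≡ 2^ℓ (mod 2^k − 1), and gcd(e, 2^m − 1) = 1. Identify F_{2^k} with the subfield {u ∈ F_{2^m} : u^{2^k} = u} of F_{2^m}. Let a : F_{2^k} → F_2⁴ be a map such that every value a(γ) = (a₀, a₁, a₂, a₃) satisfies a₀ + a₁ + a₂ + a₃ = 1 in F_2 (odd Hamming weight), and for each of the eight quadruples q ∈ F_2⁴ of odd Hamming weight, the number of γ ∈ F_{2^k} with a(γ) = q equals 2^{k−3}. Define f : F_{2^m} × F_{2^m} × F_2 × F_2 → F_2 by f(0, y, z₁, z₂) = z₁z₂ and, for x ≠ 0, f(x, y, z₁, z₂) = a(Tr_k^m(y · (x⁻¹)^e))_{(z₁,z₂)}, where the four components of a quadruple are indexed by (z₁, z₂) = (0,0), (0,1), (1,0), (1,1) in positions 0, 1, 2, 3 respectively. Then f is a bent function: for every nonzero (u, v, c₁, c₂) ∈ F_{2^m} × F_{2^m} × F_2 × F_2, the derivative (x,y,z₁,z₂) ↦ f(x+u, y+v, z₁+c₁, z₂+c₂) + f(x,y,z₁,z₂) takes each of the values 0 and 1 exactly 2^{2m+1}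 times. -/

import Mathlib

/-- The relative trace `Tr_k^m : F_{2^m} → F_{2^k}`, with `F_{2^k}` identified with the
subfield `{u : u^{2^k} = u}` of `F_{2^m}`. -/
noncomputable def TrRel (k m : ℕ) (x : GaloisField 2 m) : GaloisField 2 m :=
  ∑ i ∈ Finset.range (m / k), x ^ 2 ^ (k * i)


set_option linter.unusedSectionVars false
section abs
variable {F : Type*} [Field F] [Fintype F] [DecidableEq F] [CharP F 2] (K : Subfield F) [Fintype K]
  [DecidableEq K]

lemma fib_sum (T : F →ₗ[K] K) (hT : Function.Surjective T) :
    ∃ N : ℤ, N * Fintype.card K = Fintype.card F ∧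
      ∀ g : K → ℤ, ∑ y, g (T y) = N * ∑ γ, g γ := by
  classical
  obtain ⟨y1, hy1⟩ := hT 1
  have key : ∀ g : K → ℤ, ∑ y, g (T y) =
      ((Finset.univ.filter (fun y => T y = 0)).card : ℤ) * ∑ γ, g γ := by
    intro g
    rw [← Finset.sum_fiberwise Finset.univ T, Finset.mul_sum]
    refine Finset.sum_congr rfl fun γ _ => ?_
    rw [Finset.sum_congr rfl (g := fun _ => g γ)
      (by intro y hy; rw [(Finset.mem_filter.1 hy).2])]
    rw [Finset.sum_const, nsmul_eq_mul]
    congr 2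
    refine Finset.card_bij' (fun y _ => y - γ • y1) (fun y _ => y + γ • y1) ?_ ?_ ?_ ?_
    · intro y hy; simp at hy; simp [hy, hy1]
    · intro y hy; simp at hy; simp [hy, hy1]
    · intro y hy; simp
    · intro y hy; simp
  refine ⟨_, ?_, key⟩
  have := key (fun _ => 1)
  simp at this
  simp [this]

lemma sum_mul (b : F) (hb : b ≠ 0) (g : F → ℤ) : ∑ y, g (y * b) = ∑ y, g y :=
  Equiv.sum_comp (Equiv.mulRight₀ b hb) g

lemma indep_zero (T : F →ₗ[K] K) (hT : Function.Surjective T) (G H : K → ℤ)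
    (hG : ∑ γ, G γ = 0) (r : F) (hr : r ∉ K) (d : K) :
    ∑ y, G (T y) * H (T (r * y) + d) = 0 := by
  have hr0 : r ≠ 0 := by rintro rfl; exact hr K.zero_mem
  obtain ⟨t, ht, ht'⟩ : ∃ t, T (r * t) = 0 ∧ T t ≠ 0 := by
    by_contra! hcon
    obtain ⟨w, hw⟩ := hT 1
    set y0 := r⁻¹ * w with hy0
    have h1 : T (r * y0) = 1 := by rw [hy0, mul_inv_cancel_left₀ hr0, hw]
    have h2 : ∀ y, T y = T (r * y) * T y0 := by
      intro y
      have h3 := hcon (y - T (r * y) • y0) (by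
        rw [mul_sub, mul_smul_comm, map_sub, map_smul, h1]; simp)
      rw [map_sub, map_smul, sub_eq_zero] at h3
      exact h3
    have h4 : ∀ y, T ((1 - T y0 * r) * y) = 0 := by
      intro y
      have : (1 - T y0 * r) * y = y - T y0 • (r * y) := by
        rw [Subfield.smul_def, smul_eq_mul]; ring
      rw [this, map_sub, map_smul, h2 y, smul_eq_mul]; ring
    by_cases h5 : 1 - (T y0 : F) * r = 0
    · have h6 : r = ((T y0)⁻¹ : K) := by
        rw [sub_eq_zero] at h5
        push_cast
        exact eq_inv_of_mul_eq_one_right h5.symm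
      exact hr (h6 ▸ ((T y0)⁻¹ : K).2)
    · have := h4 ((1 - (T y0 : F) * r)⁻¹ * w)
      rw [mul_inv_cancel_left₀ h5, hw] at this
      exact one_ne_zero this
  have hS : ∀ κ : K, ∑ y, G (T y) * H (T (r * y) + d)
      = ∑ y, G (T y + κ * T t) * H (T (r * y) + d) := by
    intro κ
    rw [← Equiv.sum_comp (Equiv.addRight (κ • t))]
    refine Finset.sum_congr rfl fun y _ => ?_
    simp [mul_add, ht]
  have h7 : (Fintype.card K : ℤ) * ∑ y, G (T y) * H (T (r * y) + d) = 0 := by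
    calc _ = ∑ κ : K, ∑ y, G (T y) * H (T (r * y) + d) := by simp
      _ = ∑ κ : K, ∑ y, G (T y + κ * T t) * H (T (r * y) + d) :=
          Finset.sum_congr rfl fun κ _ => hS κ
      _ = ∑ y, (∑ κ : K, G (T y + κ * T t)) * H (T (r * y) + d) := by
          rw [Finset.sum_comm]; simp [Finset.sum_mul]
      _ = 0 := by
          refine Finset.sum_eq_zero fun y _ => ?_
          have : ∑ κ : K, G (T y + κ * T t) = ∑ γ, G γ :=
            Equiv.sum_comp ((Equiv.mulRight₀ _ ht').trans (Equiv.addLeft (T y))) G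
          rw [this, hG, zero_mul]
  rcases mul_eq_zero.1 h7 with h | h
  · exfalso; simp at h
  · exact h

variable {Z : Type*} [Fintype Z] [AddCommGroup Z]

lemma lam_sum (s : K → Z → ℤ) (h1 : ∀ z, ∑ γ, s γ z = 0) (c : Z) (A : ℤ)
    (h2 : ∀ γ, ∑ z, s γ (z + c) * s γ z = A) (τ : K) :
    ∑ l ∈ (Finset.univ.erase (0 : K)).erase 1,
      ∑ γ, ∑ z, s (l * γ + (1 + l) * τ) (z + c) * s γ z = 0 := by
  have h2K : (2 : K) = 0 := by
    ext; push_cast; exact CharTwo.two_eq_zero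
  have hall : ∑ l : K, ∑ γ, ∑ z, s (l * γ + (1 + l) * τ) (z + c) * s γ z
      = Fintype.card K * A := by
    rw [Finset.sum_comm, Finset.sum_eq_single τ]
    · have : ∀ l : K, l * τ + (1 + l) * τ = τ := by
        intro l; linear_combination (l * τ) * h2K
      simp [this, h2]
    · intro γ _ hγ
      rw [Finset.sum_comm]
      refine Finset.sum_eq_zero fun z _ => ?_
      rw [← Finset.sum_mul]
      have hne : γ + τ ≠ 0 := by
        intro h; apply hγ; linear_combination h - τ * h2K
      have : ∑ l : K, s (l * γ + (1 + l) * τ) (z + c) = ∑ l, s l (z + c) := by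
        rw [← Equiv.sum_comp ((Equiv.mulRight₀ _ hne).trans (Equiv.addRight τ)) (fun l => s l (z + c))]
        refine Finset.sum_congr rfl fun l _ => ?_
        change _ = s (l * (γ + τ) + τ) (z + c)
        congr 1
        ring
      rw [this, h1, zero_mul]
    · simp
  have e0 := Finset.add_sum_erase Finset.univ
    (fun l : K => ∑ γ, ∑ z, s (l * γ + (1 + l) * τ) (z + c) * s γ z) (Finset.mem_univ 0)
  have e1 := Finset.add_sum_erase (Finset.univ.erase (0 : K))
    (fun l : K => ∑ γ, ∑ z, s (l * γ + (1 + l) * τ) (z + c) * s γ z)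
    (a := 1) (by simp)
  have z0 : ∑ γ, ∑ z, s ((0 : K) * γ + (1 + 0) * τ) (z + c) * s γ z = 0 := by
    rw [Finset.sum_comm]
    refine Finset.sum_eq_zero fun z _ => ?_
    simp [← Finset.mul_sum, h1]
  have z1 : ∑ γ, ∑ z, s ((1 : K) * γ + (1 + 1) * τ) (z + c) * s γ z
      = Fintype.card K * A := by
    have : ∀ γ : K, 1 * γ + (1 + 1) * τ = γ := by
      intro γ; linear_combination τ * h2K
    simp only [this, h2]; simp
  rw [z0, hall] at e0
  rw [z1] at e1
  linarith

theorem abs_main (T : F →ₗ[K] K) (hT : Function.Surjective T) (e : ℕ) (he : 0 < e)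
    (hinj : Function.Injective (fun x : F => x ^ e))
    (hadd : ∀ κ ∈ K, (1 + κ) ^ e = 1 + κ ^ e)
    (hKe : ∀ x : F, x ^ e ∈ K → x ∈ K)
    (s : K → Z → ℤ) (t : Z → ℤ) (h1 : ∀ z, ∑ γ, s γ z = 0)
    (c : Z) (A : ℤ)
    (h2 : ∀ γ, ∑ z, s γ (z + c) * s γ z = A) (h3 : ∑ z, t (z + c) * t z = A)
    (u v : F) (hne : u = 0 → v = 0 → A = 0)
    (S : F → F → Z → ℤ) (hS0 : ∀ y z, S 0 y z = t z)
    (hS : ∀ x y z, x ≠ 0 → S x y z = s (T (y * x⁻¹ ^ e)) z) :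
    ∑ x, ∑ y, ∑ z, S (x + u) (y + v) (z + c) * S x y z = 0 := by
  obtain ⟨N, hN, hfib⟩ := fib_sum K T hT
  have hP : Function.Bijective (fun x : F => x⁻¹ ^ e) :=
    Finite.injective_iff_bijective.1 (hinj.comp inv_injective)
  have hP0 : ∀ x : F, x ≠ 0 → x⁻¹ ^ e ≠ 0 := fun x hx => pow_ne_zero _ (inv_ne_zero hx)
  have two : (2 : F) = 0 := CharTwo.two_eq_zero
  by_cases hu : u = 0
  · subst hu
    let E : K → ℤ := fun δ => ∑ γ, ∑ z, s (γ + δ) (z + c) * s γ z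
    have hE0 : E 0 = Fintype.card K * A := by simp [E, h2]
    have hEs : ∑ δ, E δ = 0 := by
      simp only [E]
      rw [Finset.sum_comm]
      refine Finset.sum_eq_zero fun γ _ => ?_
      rw [Finset.sum_comm]
      refine Finset.sum_eq_zero fun z _ => ?_
      rw [← Finset.sum_mul]
      have : ∑ δ, s (γ + δ) (z + c) = ∑ δ, s δ (z + c) :=
        Equiv.sum_comp (Equiv.addLeft γ) (fun δ => s δ (z + c))
      rw [this, h1, zero_mul]
    have hD : ∀ x, x ≠ 0 → ∑ y, ∑ z, S (x + 0) (y + v) (z + c) * S x y z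
        = N * E (T (v * x⁻¹ ^ e)) := by
      intro x hx
      simp only [add_zero, hS x _ _ hx, add_mul, map_add]
      rw [sum_mul _ (hP0 x hx) (fun y => ∑ z, s (T y + T (v * x⁻¹ ^ e)) (z + c) * s (T y) z)]
      rw [hfib (fun γ => ∑ z, s (γ + T (v * x⁻¹ ^ e)) (z + c) * s γ z)]
    have hD0 : ∑ y, ∑ z, S (0 + 0) (y + v) (z + c) * S 0 y z = Fintype.card F * A := by
      simp [hS0, h3]
    have : ∀ x, ∑ y, ∑ z, S (x + 0) (y + v) (z + c) * S x y z
        = N * E (T (v * x⁻¹ ^ e)) := by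
      intro x
      by_cases hx : x = 0
      · subst hx
        rw [hD0, inv_zero, zero_pow he.ne', mul_zero, map_zero, hE0, ← hN, mul_assoc]
      · exact hD x hx
    rw [Finset.sum_congr rfl fun x _ => this x, ← Finset.mul_sum]
    by_cases hv : v = 0
    · simp [hv, hE0, hne rfl hv]
    · have h5 : ∑ x : F, E (T (v * x⁻¹ ^ e)) = ∑ w, E (T w) :=
        Equiv.sum_comp ((Equiv.ofBijective _ hP).trans (Equiv.mulLeft₀ v hv)) (fun w => E (T w))
      rw [h5, hfib, hEs]; simp
  · have hD0 : ∑ y, ∑ z, S (0 + u) (y + v) (z + c) * S 0 y z = 0 := by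
      simp only [zero_add, hS0, hS u _ _ hu]
      rw [Finset.sum_comm]
      refine Finset.sum_eq_zero fun z _ => ?_
      have hsh : ∑ y, s (T ((y + v) * u⁻¹ ^ e)) (z + c) = ∑ y, s (T (y * u⁻¹ ^ e)) (z + c) :=
        Equiv.sum_comp (Equiv.addRight v) (fun y => s (T (y * u⁻¹ ^ e)) (z + c))
      rw [← Finset.sum_mul, hsh,
        sum_mul _ (hP0 u hu) (fun y => s (T y) (z + c)), hfib (fun γ => s γ (z + c)), h1]
      simp
    have huu : u + u = 0 := CharTwo.add_self_eq_zero u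
    have hDu : ∑ y, ∑ z, S (u + u) (y + v) (z + c) * S u y z = 0 := by
      simp only [huu, hS0, hS u _ _ hu]
      rw [Finset.sum_comm]
      refine Finset.sum_eq_zero fun z _ => ?_
      rw [← Finset.mul_sum,
        sum_mul _ (hP0 u hu) (fun y => s (T y) z), hfib (fun γ => s γ z), h1]
      simp
    have hxu : ∀ x, x ≠ u → x + u ≠ 0 := by
      intro x hx h; apply hx; linear_combination h - u * two
    have hDi : ∀ x, x ≠ 0 → x ≠ u → x * (x + u)⁻¹ ∉ K →
        ∑ y, ∑ z, S (x + u) (y + v) (z + c) * S x y z = 0 := by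
      intro x hx hx' hK
      have hx'' := hxu x hx'
      simp only [hS x _ _ hx, hS _ _ _ hx'']
      rw [Finset.sum_comm]
      refine Finset.sum_eq_zero fun z _ => ?_
      have hr : (x * (x + u)⁻¹) ^ e ∉ K := fun h => hK (hKe _ h)
      have := indep_zero K T hT (fun γ => s γ z) (fun γ => s γ (z + c)) (h1 z) _ hr
        (T (v * (x + u)⁻¹ ^ e))
      rw [← sum_mul _ (hP0 x hx)] at this
      rw [← this]
      refine Finset.sum_congr rfl fun y _ => ?_
      rw [mul_comm (s _ _), ← map_add]
      congr 3
      have : x ^ e * x⁻¹ ^ e = 1 := by rw [← mul_pow, mul_inv_cancel₀ hx, one_pow]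
      rw [mul_pow]
      congr 1
      linear_combination (- y * (x + u)⁻¹ ^ e) * this
    set τ := T (v * u⁻¹ ^ e) with hτ
    let I := (Finset.univ.erase (0 : K)).erase 1
    let X : K → F := fun κ => (κ : F) * u * (1 + (κ : F))⁻¹
    have hI : ∀ κ : K, κ ∈ I → (κ : F) ≠ 0 ∧ (1 + κ : F) ≠ 0 := by
      intro κ hκ
      simp [I] at hκ
      refine ⟨by simpa using hκ.2, ?_⟩
      intro h; apply hκ.1; ext; push_cast; linear_combination h - two
    have hXu : ∀ κ ∈ I, X κ + u = u * (1 + κ : F)⁻¹ := by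
      intro κ hκ
      have := (hI κ hκ).2
      simp only [X]; field_simp
      linear_combination κ * two
    have hX0 : ∀ κ ∈ I, X κ ≠ 0 := fun κ hκ =>
      mul_ne_zero (mul_ne_zero (hI κ hκ).1 hu) (inv_ne_zero (hI κ hκ).2)
    have hXu0 : ∀ κ ∈ I, X κ + u ≠ 0 := fun κ hκ => by
      rw [hXu κ hκ]; exact mul_ne_zero hu (inv_ne_zero (hI κ hκ).2)
    have hXr : ∀ κ ∈ I, X κ * (X κ + u)⁻¹ = κ := by
      intro κ hκ
      have := (hI κ hκ).2
      rw [hXu κ hκ]; simp only [X]; field_simp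
    have hXinj : Set.InjOn X I := by
      intro κ hκ κ' hκ' h
      ext
      rw [← hXr κ hκ, ← hXr κ' hκ', h]
    have hsum : ∑ x, ∑ y, ∑ z, S (x + u) (y + v) (z + c) * S x y z
        = ∑ κ ∈ I, ∑ y, ∑ z, S (X κ + u) (y + v) (z + c) * S (X κ) y z := by
      rw [← Finset.sum_image (f := fun x => ∑ y, ∑ z, S (x + u) (y + v) (z + c) * S x y z) hXinj]
      symm
      refine Finset.sum_subset (Finset.subset_univ _) ?_
      intro x _ hx
      by_cases hx0 : x = 0
      · rw [hx0]; exact hD0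
      by_cases hxu' : x = u
      · rw [hxu']; exact hDu
      refine hDi x hx0 hxu' ?_
      intro hK
      apply hx
      have hx'' := hxu x hxu'
      refine Finset.mem_image.2 ⟨⟨_, hK⟩, ?_, ?_⟩
      · simp only [I, Finset.mem_erase, Finset.mem_univ, and_true]
        constructor
        · intro h
          have h := congrArg Subtype.val h
          simp at h
          field_simp at h
          apply hu; linear_combination -h
        · intro h
          have h := congrArg Subtype.val h
          simp at h
          tauto
      · simp only [X]
        have : 1 + x * (x + u)⁻¹ = u * (x + u)⁻¹ := by
          field_simp; linear_combination x * two
        rw [this]; field_simp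
    rw [hsum]
    have hterm : ∀ κ ∈ I, ∑ y, ∑ z, S (X κ + u) (y + v) (z + c) * S (X κ) y z
        = N * ∑ γ, ∑ z, s (κ ^ e * γ + (1 + κ ^ e) * τ) (z + c) * s γ z := by
      intro κ hκ
      simp only [hS _ _ _ (hX0 κ hκ), hS _ _ _ (hXu0 κ hκ)]
      rw [← hfib (fun γ => ∑ z, s (κ ^ e * γ + (1 + κ ^ e) * τ) (z + c) * s γ z),
        ← sum_mul _ (hP0 _ (hX0 κ hκ)) (fun y =>
          ∑ z, s (κ ^ e * T y + (1 + κ ^ e) * τ) (z + c) * s (T y) z)]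
      refine Finset.sum_congr rfl fun y _ => ?_
      have ha : (X κ + u)⁻¹ ^ e = κ ^ e * (X κ)⁻¹ ^ e := by
        rw [← mul_pow]
        congr 1
        rw [eq_mul_inv_iff_mul_eq₀ (hX0 κ hκ), mul_comm]
        exact hXr κ hκ
      have hb : (X κ + u)⁻¹ ^ e = (1 + κ ^ e) * u⁻¹ ^ e := by
        rw [hXu κ hκ, ← hadd κ κ.2, ← mul_pow]
        congr 1
        rw [mul_inv, inv_inv, mul_comm]
      have hc : T ((y + v) * (X κ + u)⁻¹ ^ e)
          = κ ^ e * T (y * (X κ)⁻¹ ^ e) + (1 + κ ^ e) * τ := by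
        rw [add_mul, map_add, hτ]
        rw [← smul_eq_mul (κ ^ e), ← smul_eq_mul (1 + κ ^ e), ← map_smul, ← map_smul]
        congr 2
        · rw [ha, Subfield.smul_def, smul_eq_mul]; push_cast; ring
        · rw [hb, Subfield.smul_def, smul_eq_mul]; push_cast; ring
      rw [hc]
    rw [Finset.sum_congr rfl hterm, ← Finset.mul_sum]
    have hbij : Function.Bijective (fun κ : K => κ ^ e) := by
      apply Finite.injective_iff_bijective.1
      intro x y h
      ext
      apply hinj
      have := congrArg Subtype.val h
      simpa using this
    have hlast : ∑ κ ∈ I, ∑ γ, ∑ z, s (κ ^ e * γ + (1 + κ ^ e) * τ) (z + c) * s γ z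
        = ∑ l ∈ I, ∑ γ, ∑ z, s (l * γ + (1 + l) * τ) (z + c) * s γ z := by
      refine Finset.sum_equiv (Equiv.ofBijective _ hbij) ?_ ?_
      · intro κ
        simp only [I, Finset.mem_erase, Finset.mem_univ, and_true, Equiv.ofBijective_apply]
        refine and_congr (not_congr ?_) (not_congr ?_)
        · constructor
          · rintro rfl; simp
          · intro h; apply hbij.1; simpa using h
        · simp [he.ne']
      · intro κ _; rfl
    rw [hlast, lam_sum K s h1 c A h2 τ, mul_zero]
end abs

/-- The sign of a bit. -/
def sgnBit (b : ZMod 2) : ℤ := if b = 0 then 1 else -1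

lemma sgnBit_add (a b : ZMod 2) : sgnBit (a + b) = sgnBit a * sgnBit b := by
  revert a b; decide

set_option maxRecDepth 100000 in
lemma odd_autocorr (q : ZMod 2 → ZMod 2 → ZMod 2)
    (hq : q 0 0 + q 0 1 + q 1 0 + q 1 1 = 1) (c : ZMod 2 × ZMod 2) :
    ∑ z : ZMod 2 × ZMod 2, sgnBit (q (z + c).1 (z + c).2) * sgnBit (q z.1 z.2)
      = if c = 0 then 4 else 0 := by
  obtain ⟨c1, c2⟩ := c
  rw [Fintype.sum_prod_type]
  have h2 : ∀ g : ZMod 2 → ℤ, ∑ x, g x = g 0 + g 1 := fun g => Fin.sum_univ_two g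
  simp only [h2, Prod.fst_add, Prod.snd_add]
  generalize h00 : q 0 0 = q00 at *
  generalize h01 : q 0 1 = q01 at *
  generalize h10 : q 1 0 = q10 at *
  generalize h11 : q 1 1 = q11 at *
  have hc : ∀ c : ZMod 2, c = 0 ∨ c = 1 := by decide
  have h1 : (1 + 1 : ZMod 2) = 0 := by decide
  rcases hc c1 with rfl | rfl <;> rcases hc c2 with rfl | rfl <;>
    simp only [add_zero, zero_add, h1, h00, h01, h10, h11] <;>
    clear h00 h01 h10 h11 <;> revert q00 q01 q10 q11 <;> decide

lemma odd_balance (z : ZMod 2 × ZMod 2) :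
    ∑ q : ZMod 2 → ZMod 2 → ZMod 2,
      (if q 0 0 + q 0 1 + q 1 0 + q 1 1 = 1 then sgnBit (q z.1 z.2) else 0) = 0 := by
  revert z; decide

/-- The subfield with 2^k elements. -/
noncomputable def fixK (k m : ℕ) : Subfield (GaloisField 2 m) :=
  (iterateFrobenius (GaloisField 2 m) 2 k).eqLocusField (RingHom.id _)

lemma mem_fixK {k m : ℕ} {x : GaloisField 2 m} : x ∈ fixK k m ↔ x ^ 2 ^ k = x := by
  change iterateFrobenius (GaloisField 2 m) 2 k x = x ↔ _
  rw [iterateFrobenius_def]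

lemma gf_pow_card {m : ℕ} (hm : 0 < m) (x : GaloisField 2 m) : x ^ 2 ^ m = x := by
  have : Fintype (GaloisField 2 m) := Fintype.ofFinite _
  have h := FiniteField.pow_card x
  rwa [← Nat.card_eq_fintype_card, GaloisField.card 2 m hm.ne'] at h

lemma TrRel_mem {k m : ℕ} (hm : 0 < m) (hkm : k ∣ m) (x : GaloisField 2 m) :
    TrRel k m x ∈ fixK k m := by
  obtain ⟨n, rfl⟩ := hkm
  have hk : 0 < k := Nat.pos_of_mul_pos_right hm
  rw [mem_fixK, ← iterateFrobenius_def (R := GaloisField 2 (k * n)) 2 k]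
  unfold TrRel
  rw [Nat.mul_div_cancel_left _ hk, map_sum]
  have h : ∀ i, iterateFrobenius (GaloisField 2 (k * n)) 2 k (x ^ 2 ^ (k * i))
      = x ^ 2 ^ (k * (i + 1)) := by
    intro i
    rw [iterateFrobenius_def, ← pow_mul, ← pow_add, mul_add, mul_one]
  simp only [h]
  have h1 := Finset.sum_range_succ (fun i => x ^ 2 ^ (k * i)) n
  have h2 := Finset.sum_range_succ' (fun i => x ^ 2 ^ (k * i)) n
  rw [h1] at h2
  simp only [mul_zero, pow_zero, pow_one, gf_pow_card hm] at h2
  exact (add_right_cancel h2).symm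

lemma fixK_pow {k m : ℕ} {x : GaloisField 2 m} (hx : x ∈ fixK k m) (i : ℕ) :
    x ^ 2 ^ (k * i) = x := by
  rw [mem_fixK] at hx
  induction i with
  | zero => simp
  | succ i ih => rw [mul_add, mul_one, pow_add, pow_mul, ih, hx]

/-- The trace as a linear map. -/
noncomputable def trLin {k m : ℕ} (hm : 0 < m) (hkm : k ∣ m) :
    GaloisField 2 m →ₗ[fixK k m] fixK k m where
  toFun x := ⟨TrRel k m x, TrRel_mem hm hkm x⟩
  map_add' x y := by
    ext
    simp only [TrRel, Subfield.coe_add]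
    rw [← Finset.sum_add_distrib]
    exact Finset.sum_congr rfl fun i _ => add_pow_char_pow x y _ _
  map_smul' c x := by
    ext
    simp only [TrRel, RingHom.id_apply, smul_eq_mul, Subfield.coe_mul, Subfield.smul_def]
    rw [Finset.mul_sum]
    exact Finset.sum_congr rfl fun i _ => by rw [mul_pow, fixK_pow c.2]

lemma trLin_surj {k m : ℕ} (hm : 0 < m) (hkm : k ∣ m) :
    Function.Surjective (trLin hm hkm) := by
  classical
  obtain ⟨x, hx⟩ : ∃ x, TrRel k m x ≠ 0 := by
    by_contra! hcon
    obtain ⟨n, rfl⟩ := hkm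
    have hk : 0 < k := Nat.pos_of_mul_pos_right hm
    have hn : 0 < n := Nat.pos_of_mul_pos_left hm
    have : Fintype (GaloisField 2 (k * n)) := Fintype.ofFinite _
    let p : Polynomial (GaloisField 2 (k * n)) :=
      ∑ i ∈ Finset.range n, Polynomial.X ^ 2 ^ (k * i)
    have hp0 : p.coeff 1 = 1 := by
      simp only [p, Polynomial.finsetSum_coeff, Polynomial.coeff_X_pow]
      rw [Finset.sum_eq_single 0]
      · simp
      · intro i _ hi
        rw [if_neg]
        exact (Nat.one_lt_two_pow (Nat.mul_ne_zero hk.ne' hi)).ne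
      · intro h; exact absurd (Finset.mem_range.2 hn) h
    have hpne : p ≠ 0 := by intro h; rw [h] at hp0; simp at hp0
    have hdeg : p.natDegree ≤ 2 ^ (k * (n - 1)) := by
      refine Polynomial.natDegree_sum_le_of_forall_le _ _ ?_
      intro i hi
      rw [Polynomial.natDegree_X_pow]
      have := Finset.mem_range.1 hi
      exact Nat.pow_le_pow_right (by norm_num) (Nat.mul_le_mul_left _ (by omega))
    have hlt : 2 ^ (k * (n - 1)) < 2 ^ (k * n) :=
      Nat.pow_lt_pow_right (by norm_num) (Nat.mul_lt_mul_of_pos_left (by omega) hk)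
    apply hpne
    refine Polynomial.eq_zero_of_natDegree_lt_card_of_eval_eq_zero' p Finset.univ ?_ ?_
    · intro x _
      have := hcon x
      simp only [TrRel, Nat.mul_div_cancel_left _ hk] at this
      simpa [p, Polynomial.eval_finsetSum] using this
    · rw [Finset.card_univ, ← Nat.card_eq_fintype_card, GaloisField.card 2 _ hm.ne']
      omega
  have hx' : trLin hm hkm x ≠ 0 := fun h => hx (congrArg Subtype.val h)
  intro γ
  refine ⟨(γ * (trLin hm hkm x)⁻¹) • x, ?_⟩
  rw [map_smul, smul_eq_mul, inv_mul_cancel_right₀ hx']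

lemma gf_pow_inj {m e : ℕ} (hm : 0 < m) (he : 0 < e) (hgcd : Nat.gcd e (2 ^ m - 1) = 1) :
    Function.Injective (fun x : GaloisField 2 m => x ^ e) := by
  intro x y h
  simp only at h
  by_cases hy : y = 0
  · subst hy
    rw [zero_pow he.ne'] at h
    exact pow_eq_zero_iff he.ne' |>.1 h
  have h1 : (x / y) ^ e = 1 := by rw [div_pow, h, div_self (pow_ne_zero _ hy)]
  have h0 : x / y ≠ 0 := by
    intro h0; rw [h0, zero_pow he.ne'] at h1; exact zero_ne_one h1
  have h2 : (x / y) ^ (2 ^ m - 1) = 1 := by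
    apply mul_right_cancel₀ h0
    rw [← pow_succ, Nat.sub_add_cancel Nat.one_le_two_pow, gf_pow_card hm, one_mul]
  have h3 := Nat.dvd_gcd (orderOf_dvd_of_pow_eq_one h1) (orderOf_dvd_of_pow_eq_one h2)
  rw [hgcd, Nat.dvd_one, orderOf_eq_one_iff] at h3
  exact (div_eq_one_iff_eq hy).1 h3

lemma fixK_pow_e {m k ℓ e : ℕ} (he : 0 < e) (hmod : e ≡ 2 ^ ℓ [MOD 2 ^ k - 1])
    {x : GaloisField 2 m} (hx : x ∈ fixK k m) : x ^ e = x ^ 2 ^ ℓ := by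
  by_cases h0 : x = 0
  · subst h0; rw [zero_pow he.ne', zero_pow (by positivity)]
  have h2 : x ^ (2 ^ k - 1) = 1 := by
    apply mul_right_cancel₀ h0
    rw [← pow_succ, Nat.sub_add_cancel Nat.one_le_two_pow, mem_fixK.1 hx, one_mul]
  rw [pow_eq_pow_mod e h2, pow_eq_pow_mod (2 ^ ℓ) h2]
  exact congrArg _ hmod

/-- Theorem 5.3: assigning to each odd-weight quadruple exactly `2^{k-3}` spread sets
`A(γ)` of the generalized Desarguesian spread and defining `f` to be constant on each
part `A(γ) × {(z₁,z₂)}` accordingly (with `f = z₁z₂` on `U × {(z₁,z₂)}`) yields a bent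
function. Here `a γ z₁ z₂` is the component of the quadruple assigned to `γ ∈ F_{2^k}`
indexed by `(z₁, z₂)`. -/
theorem gPSap_partition_concatenation_is_bent
    (m k ℓ e : ℕ) (hm : 0 < m) (hk : 3 ≤ k) (hℓ : 0 < ℓ) (he : 0 < e)
    (hkm : k ∣ m) (hmod : e ≡ 2 ^ ℓ [MOD 2 ^ k - 1])
    (hgcd : Nat.gcd e (2 ^ m - 1) = 1)
    (a : GaloisField 2 m → ZMod 2 → ZMod 2 → ZMod 2)
    (hodd : ∀ γ : GaloisField 2 m, γ ^ 2 ^ k = γ →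
      a γ 0 0 + a γ 0 1 + a γ 1 0 + a γ 1 1 = 1)
    (hcount : ∀ q : ZMod 2 → ZMod 2 → ZMod 2,
      q 0 0 + q 0 1 + q 1 0 + q 1 1 = 1 →
      Nat.card {γ : GaloisField 2 m //
        γ ^ 2 ^ k = γ ∧ ∀ z₁ z₂ : ZMod 2, a γ z₁ z₂ = q z₁ z₂} = 2 ^ (k - 3))
    (f : GaloisField 2 m × GaloisField 2 m × ZMod 2 × ZMod 2 → ZMod 2)
    (hf0 : ∀ (y : GaloisField 2 m) (z₁ z₂ : ZMod 2), f (0, y, z₁, z₂) = z₁ * z₂)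
    (hf : ∀ (x y : GaloisField 2 m) (z₁ z₂ : ZMod 2), x ≠ 0 →
      f (x, y, z₁, z₂) = a (TrRel k m (y * (x⁻¹) ^ e)) z₁ z₂) :
    ∀ (u v : GaloisField 2 m) (c₁ c₂ : ZMod 2),
      (u, v, c₁, c₂) ≠ ((0, 0, 0, 0) :
        GaloisField 2 m × GaloisField 2 m × ZMod 2 × ZMod 2) →
      ∀ c : ZMod 2,
        Nat.card {p : GaloisField 2 m × GaloisField 2 m × ZMod 2 × ZMod 2 //
          f (p.1 + u, p.2.1 + v, p.2.2.1 + c₁, p.2.2.2 + c₂) + f p = c} =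
        2 ^ (2 * m + 1) := by
  classical
  intro u v c₁ c₂ hne c
  have : Fintype (GaloisField 2 m) := Fintype.ofFinite _
  have : Fintype (fixK k m) := Fintype.ofFinite _
  have hinj := gf_pow_inj hm he hgcd
  let s : fixK k m → ZMod 2 × ZMod 2 → ℤ := fun γ z => sgnBit (a γ z.1 z.2)
  have h1 : ∀ z, ∑ γ, s γ z = 0 := by
    intro z
    rw [← Finset.sum_fiberwise Finset.univ (fun γ : fixK k m => a γ)]
    have : ∀ q : ZMod 2 → ZMod 2 → ZMod 2,
        ∑ γ ∈ Finset.univ.filter (fun γ : fixK k m => a γ = q), s γ z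
        = 2 ^ (k - 3) *
          (if q 0 0 + q 0 1 + q 1 0 + q 1 1 = 1 then sgnBit (q z.1 z.2) else 0) := by
      intro q
      rw [Finset.sum_congr rfl (g := fun _ => sgnBit (q z.1 z.2))
        (by intro γ hγ; simp only [s]; rw [(Finset.mem_filter.1 hγ).2])]
      rw [Finset.sum_const, nsmul_eq_mul]
      split_ifs with hq
      · congr 1
        have h := hcount q hq
        have e1 : Nat.card {γ : fixK k m // a γ = q} = 2 ^ (k - 3) := by
          rw [← h]
          refine Nat.card_congr ⟨fun γ => ⟨γ.1.1, mem_fixK.1 γ.1.2, fun z₁ z₂ => ?_⟩,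
            fun γ => ⟨⟨γ.1, mem_fixK.2 γ.2.1⟩, ?_⟩, fun _ => rfl, fun _ => rfl⟩
          · rw [γ.2]
          · funext z₁ z₂; exact γ.2.2 z₁ z₂
        rw [Nat.card_eq_fintype_card, Fintype.card_subtype] at e1
        rw [e1]; push_cast; rfl
      · rw [Finset.filter_eq_empty_iff.2]
        · simp
        · intro γ _ hγ
          apply hq; rw [← hγ]; exact hodd _ (mem_fixK.1 γ.2)
    rw [Finset.sum_congr rfl fun q _ => this q, ← Finset.mul_sum, odd_balance, mul_zero]
  have main := abs_main (fixK k m) (trLin hm hkm) (trLin_surj hm hkm) e he hinj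
    (by
      intro κ hκ
      rw [fixK_pow_e he hmod hκ, fixK_pow_e he hmod (add_mem (one_mem _) hκ),
        add_pow_char_pow, one_pow])
    (by
      intro x hx
      rw [mem_fixK] at hx ⊢
      apply hinj
      simp only
      rw [← hx, ← pow_mul, ← pow_mul, mul_comm])
    s (fun z => sgnBit (z.1 * z.2)) h1 (c₁, c₂) (if (c₁, c₂) = 0 then 4 else 0)
    (fun γ => odd_autocorr _ (hodd _ (mem_fixK.1 γ.2)) _)
    (odd_autocorr (fun z₁ z₂ => z₁ * z₂) (by decide) _)
    u v
    (by
      rintro rfl rfl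
      rw [if_neg]
      intro h
      apply hne
      have ha : c₁ = 0 := congrArg Prod.fst h
      have hb : c₂ = 0 := congrArg Prod.snd h
      rw [ha, hb])
    (fun x y z => sgnBit (f (x, y, z)))
    (fun y z => by rw [← hf0 y z.1 z.2])
    (fun x y z hx => by simp only [s]; rw [hf x y z.1 z.2 hx]; rfl)
  simp only [← sgnBit_add] at main
  let g : GaloisField 2 m × GaloisField 2 m × ZMod 2 × ZMod 2 → ZMod 2 := fun p =>
    f (p.1 + u, p.2.1 + v, p.2.2.1 + c₁, p.2.2.2 + c₂) + f p
  have main' : ∑ p, sgnBit (g p) = 0 := by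
    rw [Fintype.sum_prod_type, ← main]
    refine Finset.sum_congr rfl fun x _ => ?_
    rw [Fintype.sum_prod_type]
    rfl
  change Nat.card {p // g p = c} = _
  rw [Nat.card_eq_fintype_card, Fintype.card_subtype]
  rw [← Finset.sum_fiberwise Finset.univ g] at main'
  have hfc : ∀ d, ∑ p ∈ Finset.univ.filter (fun p => g p = d), sgnBit (g p)
      = (Finset.univ.filter (fun p => g p = d)).card * sgnBit d := by
    intro d
    rw [Finset.sum_congr rfl (g := fun _ => sgnBit d)
      (by intro p hp; rw [(Finset.mem_filter.1 hp).2]), Finset.sum_const, nsmul_eq_mul]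
  rw [Finset.sum_congr rfl fun d _ => hfc d] at main'
  have hcard := Finset.card_eq_sum_card_fiberwise (f := g) (s := Finset.univ)
    (t := Finset.univ) (fun _ _ => Finset.mem_coe.2 (Finset.mem_univ _))
  have hF : Fintype.card (GaloisField 2 m) = 2 ^ m := by
    rw [← Nat.card_eq_fintype_card, GaloisField.card 2 m hm.ne']
  have hZ : Fintype.card (ZMod 2) = 2 := rfl
  have two1 : ∀ G : ZMod 2 → ℤ, ∑ x, G x = G 0 + G 1 := fun G => Fin.sum_univ_two G
  have two2 : ∀ G : ZMod 2 → ℕ, ∑ x, G x = G 0 + G 1 := fun G => Fin.sum_univ_two G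
  rw [Finset.card_univ, Fintype.card_prod, Fintype.card_prod, Fintype.card_prod, hF, hZ,
    two2] at hcard
  rw [two1] at main'
  have s0 : sgnBit 0 = 1 := rfl
  have s1 : sgnBit 1 = -1 := rfl
  rw [s0, s1] at main'
  have hpow : 2 ^ m * (2 ^ m * (2 * 2)) = 2 * 2 ^ (2 * m + 1) := by ring
  rw [hpow] at hcard
  have hc : ∀ c : ZMod 2, c = 0 ∨ c = 1 := by decide
  rcases hc c with rfl | rfl <;> omega
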